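/- arXiv:1201.2739 — 8 statements merged into one kernel-verified Lean document; each statement's English description precedes it below -/
import Mathlib

section
/- Fix an integer k ≥ 2. There exists a real constant c > 0 (depending only on k) such that for all positive integers n and ℓ with k ∣ n, k ∣ ℓ and k ≤ ℓ ≤ n, and for every subset Y of Fin n with card Y = ℓ, the number of k-divisions of Fin n that are good with respect to Y is at least c · (ℓ : ℝ)^((1−k)/2) times the total number of k-divisions of Fin n. Equivalently, the probability that a uniformly random k-division is good with respect to Y is at least c · ℓ^((1−k)/2). -/
/-- A `k`-division of `Fin n`: a partition of `Fin n` into `k` blocks,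
each of cardinality `n / k`. -/
def IsKDivision (n k : ℕ) (D : Finset (Finset (Fin n))) : Prop :=
  D.card = k ∧ (∀ I ∈ D, I.card = n / k) ∧
    (∀ I ∈ D, ∀ J ∈ D, I ≠ J → Disjoint I J) ∧ D.biUnion id = Finset.univ

instance (n k : ℕ) (D : Finset (Finset (Fin n))) : Decidable (IsKDivision n k D) := by
  unfold IsKDivision; infer_instance

/-- A division is good with respect to `Y` (of cardinality `ℓ`) if every block
meets `Y` in exactly `ℓ / k` elements. -/
def IsGoodDivision (n ℓ k : ℕ) (Y : Finset (Fin n)) (D : Finset (Finset (Fin n))) : Prop :=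
  ∀ I ∈ D, (I ∩ Y).card = ℓ / k

instance (n ℓ k : ℕ) (Y : Finset (Fin n)) (D : Finset (Finset (Fin n))) :
    Decidable (IsGoodDivision n ℓ k Y D) := by
  unfold IsGoodDivision; infer_instance

lemma fact_upper (n : ℕ) (hn : 1 ≤ n) : (n.factorial : ℝ) ≤ Real.exp 1 * (√n * (n / Real.exp 1)^n) := by
  obtain ⟨j, rfl⟩ : ∃ j, n = j+1 := ⟨n-1, by omega⟩
  have h := Stirling.stirlingSeq'_antitone (Nat.zero_le j)
  simp only [Function.comp, Nat.succ_eq_add_one, zero_add, Stirling.stirlingSeq_one] at h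
  unfold Stirling.stirlingSeq at h
  rw [div_le_iff₀ (by positivity)] at h
  refine h.trans (le_of_eq ?_)
  rw [Real.sqrt_mul (by norm_num)]
  have : √(2:ℝ) ≠ 0 := by positivity
  field_simp
lemma fact_lower (n : ℕ) : √n * (n / Real.exp 1)^n ≤ (n.factorial : ℝ) := by
  refine le_trans ?_ (Stirling.le_factorial_stirling n)
  gcongr
  have := Real.pi_gt_three
  nlinarith [(Nat.cast_nonneg n : (0:ℝ) ≤ n)]
lemma g_mul (k x : ℕ) (hk : 1 ≤ k) :
    (√((k*x : ℕ):ℝ) * (((k*x:ℕ):ℝ) / Real.exp 1)^(k*x)) * √x^(k-1) = √k * ((k:ℝ)^(k*x) * (√x * (x / Real.exp 1)^x)^k) := by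
  obtain ⟨j, rfl⟩ : ∃ j, k = j+1 := ⟨k-1, by omega⟩
  generalize hK : (j+1) = K
  have hKj : K - 1 = j := by omega
  rw [hKj, Nat.cast_mul, Real.sqrt_mul (by positivity), mul_div_assoc, mul_pow, mul_pow, ← pow_mul, mul_comm x K]
  have : √(x:ℝ)^K = √(x:ℝ) * √(x:ℝ)^j := by rw [← hK]; ring
  rw [this]; ring
lemma up (k x : ℕ) (hk : 1 ≤ k) (hx : 1 ≤ x) :
    ((k*x).factorial : ℝ) * √x^(k-1) ≤ (Real.exp 1 * √k) * ((k:ℝ)^(k*x) * (x.factorial:ℝ)^k) := by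
  have h1 := fact_upper (k*x) (Nat.mul_pos hk hx)
  have h2 := fact_lower x
  calc _ ≤ (Real.exp 1 * (√((k*x : ℕ):ℝ) * (((k*x:ℕ):ℝ) / Real.exp 1)^(k*x))) * √x^(k-1) := by gcongr
    _ = Real.exp 1 * (√k * ((k:ℝ)^(k*x) * (√x * (x / Real.exp 1)^x)^k)) := by rw [← g_mul k x hk]; ring
    _ ≤ Real.exp 1 * (√k * ((k:ℝ)^(k*x) * (x.factorial:ℝ)^k)) := by gcongr
    _ = _ := by ring
lemma low (k x : ℕ) (hk : 1 ≤ k) (hx : 1 ≤ x) :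
    ((k:ℝ)^(k*x) * (x.factorial:ℝ)^k) ≤ Real.exp 1 ^ k * (((k*x).factorial : ℝ) * √x^(k-1)) := by
  have h1 := fact_lower (k*x)
  have h2 := fact_upper x hx
  have hs : 1 ≤ √(k:ℝ) := by rw [Real.one_le_sqrt]; exact_mod_cast hk
  calc _ ≤ (k:ℝ)^(k*x) * (Real.exp 1 * (√x * (x / Real.exp 1)^x))^k := by gcongr
    _ = Real.exp 1 ^ k * (1 * ((k:ℝ)^(k*x) * (√x * (x / Real.exp 1)^x)^k)) := by rw [mul_pow]; ring
    _ ≤ Real.exp 1 ^ k * (√k * ((k:ℝ)^(k*x) * (√x * (x / Real.exp 1)^x)^k)) := by gcongr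
    _ = Real.exp 1 ^ k * ((√((k*x : ℕ):ℝ) * (((k*x:ℕ):ℝ) / Real.exp 1)^(k*x)) * √x^(k-1)) := by rw [← g_mul k x hk]
    _ ≤ _ := by gcongr
lemma choose_bd (k m a : ℕ) (hk : 1 ≤ k) (ha : 1 ≤ a) (ham : a ≤ m) :
    ((k*m).choose (k*a) : ℝ) ≤ (Real.exp 1 * √k) * (Real.exp 1 ^ k)^2 * ((m.choose a : ℝ)^k * √a^(k-1)) := by
  obtain ⟨b, rfl⟩ := Nat.exists_eq_add_of_le ham
  have hs : 1 ≤ √(k:ℝ) := by rw [Real.one_le_sqrt]; exact_mod_cast hk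
  have hsa : 1 ≤ √(a:ℝ) := by rw [Real.one_le_sqrt]; exact_mod_cast ha
  have he : 1 ≤ Real.exp 1 := Real.one_le_exp (by norm_num)
  rcases Nat.eq_zero_or_pos b with rfl | hb
  · simp only [add_zero, Nat.choose_self, Nat.cast_one, one_pow, one_mul]
    have h1 := one_le_pow₀ (n := k) he
    have h2 := one_le_pow₀ (n := 2) h1
    have h3 := one_le_pow₀ (n := k-1) hsa
    exact one_le_mul_of_one_le_of_one_le (one_le_mul_of_one_le_of_one_le (one_le_mul_of_one_le_of_one_le he hs) h2) h3
  have h1 := up k (a+b) hk (by omega)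
  have h2 := low k a hk ha
  have h3 := low k b hk hb
  have e1 : ((a+b).choose a : ℝ) * a.factorial * b.factorial = (a+b).factorial := by
    exact_mod_cast (by simpa using Nat.choose_mul_factorial_mul_factorial ham)
  have e2 : ((k*(a+b)).choose (k*a) : ℝ) * (k*a).factorial * (k*b).factorial = (k*(a+b)).factorial := by
    have := Nat.choose_mul_factorial_mul_factorial (Nat.mul_le_mul_left k ham)
    rw [← Nat.mul_sub, Nat.add_sub_cancel_left] at this
    exact_mod_cast this
  rw [← e1, ← e2] at h1
  have hsb : √(b:ℝ) ≤ √((a+b : ℕ):ℝ) := Real.sqrt_le_sqrt (by push_cast; linarith [(Nat.cast_nonneg a : (0:ℝ) ≤ a)])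
  have hab : 0 < √((a+b : ℕ):ℝ) := by positivity
  have hkk : (k:ℝ)^(k*(a+b)) = (k:ℝ)^(k*a) * (k:ℝ)^(k*b) := by rw [mul_add, pow_add]
  set Z : ℝ := ((k*a).factorial : ℝ) * (k*b).factorial * √((a+b:ℕ):ℝ)^(k-1)
  have hZ : 0 < Z := by positivity
  refine le_of_mul_le_mul_right ?_ hZ
  calc _ ≤ (Real.exp 1 * √k) * ((k:ℝ)^(k*(a+b)) * (((a+b).choose a : ℝ) * a.factorial * b.factorial)^k) := by
        refine le_trans (le_of_eq ?_) h1; simp only [Z]; ring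
    _ = (Real.exp 1 * √k) * ((a+b).choose a : ℝ)^k * (((k:ℝ)^(k*a) * (a.factorial:ℝ)^k) * ((k:ℝ)^(k*b) * (b.factorial:ℝ)^k)) := by
        rw [hkk]; ring
    _ ≤ (Real.exp 1 * √k) * ((a+b).choose a : ℝ)^k * ((Real.exp 1 ^ k * (((k*a).factorial : ℝ) * √a^(k-1))) * (Real.exp 1 ^ k * (((k*b).factorial : ℝ) * √((a+b:ℕ):ℝ)^(k-1)))) := by
        have h3' : ((k:ℝ)^(k*b) * (b.factorial:ℝ)^k) ≤ (Real.exp 1 ^ k * (((k*b).factorial : ℝ) * √((a+b:ℕ):ℝ)^(k-1))) :=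
          h3.trans (by gcongr)
        gcongr
    _ = _ := by simp only [Z]; ring

lemma good_le (n ℓ k : ℕ) (Y Y' : Finset (Fin n)) (h : Y.card = Y'.card) :
    (Finset.univ.filter (fun D => IsKDivision n k D ∧ IsGoodDivision n ℓ k Y D)).card ≤
    (Finset.univ.filter (fun D => IsKDivision n k D ∧ IsGoodDivision n ℓ k Y' D)).card := by
  let e : {x // x ∈ Y} ≃ {x // x ∈ Y'} := Finset.equivOfCardEq h
  let σ : Equiv.Perm (Fin n) := e.extendSubtype
  have hσ : ∀ x, σ x ∈ Y' ↔ x ∈ Y := by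
    intro x
    constructor
    · intro hx
      by_contra hn
      exact e.extendSubtype_not_mem x hn hx
    · intro hx; exact e.extendSubtype_mem x hx
  let f : Finset (Fin n) ↪ Finset (Fin n) := (Finset.mapEmbedding σ.toEmbedding).toEmbedding
  have hf : ∀ I, f I = I.map σ.toEmbedding := fun I => rfl
  refine Finset.card_le_card_of_injOn (fun D => D.map f) ?_ ?_
  · intro D hD
    simp only [Finset.coe_filter, Finset.mem_univ, true_and, Set.mem_setOf_eq] at hD ⊢
    obtain ⟨⟨h1, h2, h3, h4⟩, h5⟩ := hD
    refine ⟨⟨by simpa using h1, ?_, ?_, ?_⟩, ?_⟩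
    · intro I hI
      obtain ⟨J, hJ, rfl⟩ := Finset.mem_map.1 hI
      rw [hf, Finset.card_map]; exact h2 J hJ
    · intro I hI I' hI' hne
      obtain ⟨J, hJ, rfl⟩ := Finset.mem_map.1 hI
      obtain ⟨J', hJ', rfl⟩ := Finset.mem_map.1 hI'
      rw [hf, hf, Finset.disjoint_map]
      exact h3 J hJ J' hJ' (fun h => hne (by rw [h]))
    · ext x
      have : σ.symm x ∈ D.biUnion id := by rw [h4]; simp
      obtain ⟨J, hJ, hx⟩ := Finset.mem_biUnion.1 this
      simp only [Finset.mem_univ, iff_true, Finset.mem_biUnion]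
      refine ⟨f J, Finset.mem_map_of_mem f hJ, ?_⟩
      rw [hf]
      exact Finset.mem_map.2 ⟨_, hx, by simp⟩
    · intro I hI
      obtain ⟨J, hJ, rfl⟩ := Finset.mem_map.1 hI
      have : f J ∩ Y' = (J ∩ Y).map σ.toEmbedding := by
        ext x
        rw [hf]
        simp only [Finset.mem_inter, Finset.mem_map, Equiv.coe_toEmbedding]
        constructor
        · rintro ⟨⟨y, hy, rfl⟩, hx⟩
          exact ⟨y, ⟨hy, (hσ y).1 hx⟩, rfl⟩
        · rintro ⟨y, ⟨hy, hy'⟩, rfl⟩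
          exact ⟨⟨y, hy, rfl⟩, (hσ y).2 hy'⟩
      rw [this, Finset.card_map]; exact h5 J hJ
  · intro D _ D' _ h
    exact Finset.map_injective f h

lemma count_Y (k m a : ℕ) (hk : 1 ≤ k) (D : Finset (Finset (Fin (k*m)))) (hD : IsKDivision (k*m) k D) :
    m.choose a ^ k ≤ ((Finset.univ.powersetCard (k*a)).filter
      (fun Y => IsGoodDivision (k*m) (k*a) k Y D)).card := by
  obtain ⟨h1, h2, h3, h4⟩ := hD
  rw [Nat.mul_div_cancel_left _ hk] at h2
  have hc : (D.pi (fun I => I.powersetCard a)).card = m.choose a ^ k := by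
    rw [Finset.card_pi, Finset.prod_congr rfl (g := fun _ => m.choose a), Finset.prod_const, h1]
    intro I hI
    rw [Finset.card_powersetCard, h2 I hI]
  rw [← hc]
  let U : (∀ I ∈ D, Finset (Fin (k*m))) → Finset (Fin (k*m)) := fun f => D.attach.biUnion (fun I => f I.1 I.2)
  have key : ∀ f ∈ D.pi (fun I => I.powersetCard a), ∀ I (hI : I ∈ D), I ∩ U f = f I hI := by
    intro f hf I hI
    rw [Finset.mem_pi] at hf
    ext x
    simp only [U, Finset.mem_inter, Finset.mem_biUnion, Finset.mem_attach, true_and, Subtype.exists]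
    constructor
    · rintro ⟨hx, J, hJ, hxJ⟩
      have hxJ' := (Finset.mem_powersetCard.1 (hf J hJ)).1 hxJ
      have : I = J := by
        by_contra hne
        exact Finset.disjoint_left.1 (h3 I hI J hJ hne) hx hxJ'
      subst this; exact hxJ
    · intro hx
      exact ⟨(Finset.mem_powersetCard.1 (hf I hI)).1 hx, I, hI, hx⟩
  refine Finset.card_le_card_of_injOn U ?_ ?_
  · intro f hf
    have hf' := Finset.mem_coe.1 hf
    have hg : ∀ I ∈ D, (I ∩ U f).card = a := by
      intro I hI
      rw [key f hf' I hI]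
      exact (Finset.mem_powersetCard.1 (Finset.mem_pi.1 hf' I hI)).2
    simp only [Finset.coe_filter, Set.mem_setOf_eq, Finset.mem_powersetCard, Finset.subset_univ, true_and]
    refine ⟨?_, ?_⟩
    · have : U f = D.biUnion (fun I => I ∩ U f) := by
        rw [← Finset.biUnion_inter]
        change _ = D.biUnion id ∩ _
        rw [h4, Finset.univ_inter]
      rw [this, Finset.card_biUnion, Finset.sum_congr rfl hg, Finset.sum_const, h1, smul_eq_mul]
      intro I hI J hJ hne
      exact (h3 I hI J hJ hne).mono Finset.inter_subset_left Finset.inter_subset_left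
    · intro I hI
      rw [Nat.mul_div_cancel_left _ hk]; exact hg I hI
  · intro f hf g hg hfg
    funext I hI
    rw [← key f hf I hI, ← key g hg I hI, hfg]

lemma double_count (k m a : ℕ) (hk : 1 ≤ k) (Y : Finset (Fin (k*m))) (hY : Y.card = k*a) :
    (Finset.univ.filter (fun D => IsKDivision (k*m) k D)).card * m.choose a ^ k ≤
    (Finset.univ.filter (fun D => IsKDivision (k*m) k D ∧ IsGoodDivision (k*m) (k*a) k Y D)).card *
      (k*m).choose (k*a) := by
  calc _ ≤ ∑ D ∈ Finset.univ.filter (fun D => IsKDivision (k*m) k D),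
        ((Finset.univ.powersetCard (k*a)).filter (fun Y => IsGoodDivision (k*m) (k*a) k Y D)).card := by
        rw [← smul_eq_mul]
        apply Finset.card_nsmul_le_sum
        intro D hD
        exact count_Y k m a hk D (Finset.mem_filter.1 hD).2
    _ = ∑ Y' ∈ Finset.univ.powersetCard (k*a),
        ((Finset.univ.filter (fun D => IsKDivision (k*m) k D)).filter
          (fun D => IsGoodDivision (k*m) (k*a) k Y' D)).card :=
        Finset.sum_card_bipartiteAbove_eq_sum_card_bipartiteBelow (fun D Y' => IsGoodDivision (k*m) (k*a) k Y' D)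
    _ ≤ (Finset.univ.powersetCard (k*a) : Finset (Finset (Fin (k*m)))).card • _ := by
        apply Finset.sum_le_card_nsmul
        intro Y' hY'
        rw [Finset.filter_filter]
        exact good_le _ _ _ _ Y ((Finset.mem_powersetCard.1 hY').2.trans hY.symm)
    _ = _ := by
        rw [Finset.card_powersetCard, Finset.card_univ, Fintype.card_fin, smul_eq_mul, mul_comm]

theorem stmt0 (k : ℕ) (hk : 2 ≤ k) :
    ∃ c : ℝ, 0 < c ∧ ∀ n ℓ : ℕ, 0 < n → 0 < ℓ → k ∣ n → k ∣ ℓ → k ≤ ℓ → ℓ ≤ n →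
      ∀ Y : Finset (Fin n), Y.card = ℓ →
        c * (ℓ : ℝ) ^ (((1 : ℝ) - (k : ℝ)) / 2) *
            ((Finset.univ.filter (fun D => IsKDivision n k D)).card : ℝ) ≤
          ((Finset.univ.filter
              (fun D => IsKDivision n k D ∧ IsGoodDivision n ℓ k Y D)).card : ℝ) := by
  have hk1 : 1 ≤ k := by omega
  set C : ℝ := (Real.exp 1 * √k) * (Real.exp 1 ^ k)^2 with hC
  have hCpos : 0 < C := by positivity
  refine ⟨1 / C, by positivity, ?_⟩
  rintro n ℓ hn hl ⟨m, rfl⟩ ⟨a, rfl⟩ hkl hln Y hY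
  have ha : 1 ≤ a := Nat.pos_of_mul_pos_left hl
  have ham : a ≤ m := Nat.le_of_mul_le_mul_left hln hk1
  have hd := double_count k m a hk1 Y hY
  have hb := choose_bd k m a hk1 ha ham
  rw [← hC] at hb
  set N := (Finset.univ.filter (fun D => IsKDivision (k*m) k D)).card
  set G := (Finset.univ.filter
    (fun D => IsKDivision (k*m) k D ∧ IsGoodDivision (k*m) (k*a) k Y D)).card
  have hd' : (N:ℝ) * (m.choose a : ℝ)^k ≤ G * ((k*m).choose (k*a) : ℝ) := by exact_mod_cast hd
  have hch : (0:ℝ) < (m.choose a : ℝ)^k := by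
    have := Nat.choose_pos ham
    positivity
  have hle : (N:ℝ) ≤ C * √(a:ℝ)^(k-1) * G := by
    refine le_of_mul_le_mul_right ?_ hch
    calc _ ≤ _ := hd'
      _ ≤ G * (C * ((m.choose a : ℝ)^k * √a^(k-1))) := by gcongr
      _ = _ := by ring
  have hl0 : (0:ℝ) < ((k*a : ℕ):ℝ) := by exact_mod_cast hl
  have hpow : √(a:ℝ)^(k-1) ≤ ((k*a : ℕ):ℝ) ^ (((k:ℝ) - 1)/2) := by
    have h1 : √(a:ℝ) ≤ √((k*a:ℕ):ℝ) := by
      apply Real.sqrt_le_sqrt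
      exact_mod_cast Nat.le_mul_of_pos_left a hk1
    calc _ ≤ √((k*a:ℕ):ℝ)^(k-1) := by gcongr
      _ = _ := by
        rw [Real.sqrt_eq_rpow, ← Real.rpow_natCast, ← Real.rpow_mul hl0.le, Nat.cast_sub hk1]
        congr 1
        push_cast
        ring
  have hneg : ((1:ℝ) - k)/2 = -(((k:ℝ)-1)/2) := by ring
  rw [hneg, Real.rpow_neg hl0.le]
  have hP : (0:ℝ) < ((k*a : ℕ):ℝ) ^ (((k:ℝ) - 1)/2) := Real.rpow_pos_of_pos hl0 _
  set P := ((k*a : ℕ):ℝ) ^ (((k:ℝ) - 1)/2)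
  have : (N:ℝ) ≤ C * P * G := hle.trans (by gcongr)
  calc _ = N / (C * P) := by field_simp
    _ ≤ G := by rw [div_le_iff₀ (by positivity)]; linarith
end

section
/- Let k, n, ℓ be positive integers with k ∣ n, k ∣ ℓ, ℓ ≤ n and n ≥ k, and let Y be a subset of Fin n with card Y = ℓ. Then the number of k-divisions of Fin n that are good with respect to Y equals ℓ! · (n−ℓ)! / (k! · ((ℓ/k)!)^k · (((n−ℓ)/k)!)^k). -/
open Nat

open Finset in
/-- Number of blocks of type `(a, b)` inside `U`. -/
lemma aux_blocks {α : Type*} [Fintype α] [DecidableEq α] (Y U : Finset α) (a b : ℕ) :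
    (univ.filter (fun I : Finset α => I ⊆ U ∧ (I ∩ Y).card = a ∧ (I \ Y).card = b)).card
      = (U ∩ Y).card.choose a * (U \ Y).card.choose b := by
  rw [← card_powersetCard, ← card_powersetCard, ← card_product]
  refine card_bij' (fun I _ => (I ∩ Y, I \ Y)) (fun p _ => p.1 ∪ p.2) ?_ ?_ ?_ ?_
  · intro I hI
    simp only [mem_filter, mem_univ, true_and] at hI
    simp only [mem_product, mem_powersetCard]
    exact ⟨⟨inter_subset_inter_right hI.1, hI.2.1⟩, ⟨sdiff_subset_sdiff hI.1 (le_refl _), hI.2.2⟩⟩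
  · rintro ⟨p, q⟩ h
    simp only [mem_product, mem_powersetCard] at h
    obtain ⟨⟨hp, hpa⟩, hq, hqb⟩ := h
    have h1 : (p ∪ q) ∩ Y = p := by
      ext x; have := @hp x; have := @hq x; grind
    have h2 : (p ∪ q) \ Y = q := by
      ext x; have := @hp x; have := @hq x; grind
    simp only [mem_filter, mem_univ, true_and]
    refine ⟨?_, by rw [h1, hpa], by rw [h2, hqb]⟩
    intro x; have := @hp x; have := @hq x; grind
  · intro I _
    ext x; simp only [mem_union, mem_inter, mem_sdiff]; tauto
  · rintro ⟨p, q⟩ h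
    simp only [mem_product, mem_powersetCard] at h
    obtain ⟨⟨hp, hpa⟩, hq, hqb⟩ := h
    have h1 : (p ∪ q) ∩ Y = p := by
      ext x; have := @hp x; have := @hq x; grind
    have h2 : (p ∪ q) \ Y = q := by
      ext x; have := @hp x; have := @hq x; grind
    simp only [h1, h2]

/-- Divisions of `U` into `k` blocks of type `(a, b)`. -/
def AuxDiv {α : Type*} [DecidableEq α] (Y : Finset α) (a b k : ℕ) (U : Finset α)
    (D : Finset (Finset α)) : Prop :=
  D.card = k ∧ (∀ I ∈ D, (I ∩ Y).card = a ∧ (I \ Y).card = b) ∧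
    (∀ I ∈ D, ∀ J ∈ D, I ≠ J → Disjoint I J) ∧ D.biUnion id = U

open Finset in
lemma aux_erase {α : Type*} [DecidableEq α] (Y : Finset α) (a b k : ℕ)
    (U : Finset α) (D : Finset (Finset α)) (I : Finset α)
    (h : AuxDiv Y a b (k + 1) U D) (hI : I ∈ D) :
    AuxDiv Y a b k (U \ I) (D.erase I) := by
  obtain ⟨h1, h2, h3, h4⟩ := h
  refine ⟨by rw [card_erase_of_mem hI, h1]; rfl, fun J hJ => h2 J (mem_of_mem_erase hJ),
    fun J hJ K hK => h3 J (mem_of_mem_erase hJ) K (mem_of_mem_erase hK), ?_⟩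
  subst h4
  ext x
  simp only [mem_biUnion, mem_erase, id, mem_sdiff]
  constructor
  · rintro ⟨J, ⟨hJI, hJ⟩, hx⟩
    exact ⟨⟨J, hJ, hx⟩, fun hxI => disjoint_left.1 (h3 J hJ I hI hJI) hx hxI⟩
  · rintro ⟨⟨J, hJ, hx⟩, hxI⟩
    exact ⟨J, ⟨fun e => hxI (e ▸ hx), hJ⟩, hx⟩

open Finset in
lemma aux_notMem {α : Type*} [DecidableEq α] (Y : Finset α) (a b k : ℕ) (ha : 0 < a)
    (U : Finset α) (D : Finset (Finset α)) (I : Finset α)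
    (hIa : (I ∩ Y).card = a) (h : AuxDiv Y a b k (U \ I) D) : I ∉ D := by
  intro hI
  obtain ⟨h1, h2, h3, h4⟩ := h
  obtain ⟨x, hx⟩ := card_pos.1 (hIa ▸ ha)
  have hxI := (mem_inter.1 hx).1
  have : x ∈ U \ I := h4 ▸ mem_biUnion.2 ⟨I, hI, hxI⟩
  exact (mem_sdiff.1 this).2 hxI

open Finset in
lemma aux_insert {α : Type*} [DecidableEq α] (Y : Finset α) (a b k : ℕ) (ha : 0 < a)
    (U : Finset α) (D : Finset (Finset α)) (I : Finset α) (hIU : I ⊆ U)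
    (hIa : (I ∩ Y).card = a) (hIb : (I \ Y).card = b) (h : AuxDiv Y a b k (U \ I) D) :
    AuxDiv Y a b (k + 1) U (insert I D) := by
  have hn := aux_notMem Y a b k ha U D I hIa h
  obtain ⟨h1, h2, h3, h4⟩ := h
  have hd : ∀ J ∈ D, Disjoint I J := by
    intro J hJ
    refine disjoint_left.2 fun x hx hxJ => ?_
    have : x ∈ U \ I := h4 ▸ mem_biUnion.2 ⟨J, hJ, hxJ⟩
    exact (mem_sdiff.1 this).2 hx
  refine ⟨by rw [card_insert_of_notMem hn, h1], ?_, ?_, ?_⟩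
  · intro J hJ
    rcases mem_insert.1 hJ with rfl | hJ
    · exact ⟨hIa, hIb⟩
    · exact h2 J hJ
  · intro J hJ K hK hJK
    rcases mem_insert.1 hJ with hJ1 | hJ1 <;> rcases mem_insert.1 hK with hK1 | hK1
    · exact absurd (hJ1.trans hK1.symm) hJK
    · exact hJ1 ▸ hd K hK1
    · exact hK1 ▸ (hd J hJ1).symm
    · exact h3 J hJ1 K hK1 hJK
  · rw [biUnion_insert, h4]
    exact union_sdiff_of_subset hIU

open Finset Classical in
lemma aux_double {α : Type*} [Fintype α] [DecidableEq α] (Y : Finset α) (a b k : ℕ)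
    (ha : 0 < a) (U : Finset α) :
    (univ.filter (AuxDiv Y a b (k + 1) U)).card * (k + 1) =
      ∑ I ∈ univ.filter (fun I : Finset α => I ⊆ U ∧ (I ∩ Y).card = a ∧ (I \ Y).card = b),
        (univ.filter (AuxDiv Y a b k (U \ I))).card := by
  have h0 : (univ.filter (AuxDiv Y a b (k + 1) U)).card * (k + 1) =
      ∑ D ∈ univ.filter (AuxDiv Y a b (k + 1) U), D.card := by
    rw [sum_const_nat]
    intro D hD
    exact (mem_filter.1 hD).2.1
  rw [h0, ← card_sigma, ← card_sigma]
  refine card_bij' (fun p _ => ⟨p.2, p.1.erase p.2⟩) (fun p _ => ⟨insert p.1 p.2, p.1⟩) ?_ ?_ ?_ ?_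
  · rintro ⟨D, I⟩ h
    simp only [mem_sigma, mem_filter, mem_univ, true_and] at h ⊢
    refine ⟨⟨?_, h.1.2.1 I h.2⟩, aux_erase Y a b k U D I h.1 h.2⟩
    rw [← h.1.2.2.2]
    exact subset_biUnion_of_mem id h.2
  · rintro ⟨I, D⟩ h
    simp only [mem_sigma, mem_filter, mem_univ, true_and] at h ⊢
    exact ⟨aux_insert Y a b k ha U D I h.1.1 h.1.2.1 h.1.2.2 h.2, mem_insert_self _ _⟩
  · rintro ⟨D, I⟩ h
    simp only [mem_sigma, mem_filter, mem_univ, true_and] at h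
    simp only [insert_erase h.2]
  · rintro ⟨I, D⟩ h
    simp only [mem_sigma, mem_filter, mem_univ, true_and] at h
    simp only [erase_insert (aux_notMem Y a b k ha U D I h.1.2.1 h.2)]

open Finset Classical in
lemma aux_count {α : Type*} [Fintype α] [DecidableEq α] (Y : Finset α) (a b : ℕ)
    (ha : 0 < a) (k : ℕ) : ∀ U : Finset α, (U ∩ Y).card = k * a → (U \ Y).card = k * b →
    (univ.filter (AuxDiv Y a b k U)).card * (k ! * (a !) ^ k * (b !) ^ k) =
      (k * a)! * (k * b)! := by
  induction k with
  | zero =>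
    intro U h1 h2
    have hU : U = ∅ := by
      rw [zero_mul, Finset.card_eq_zero] at h1 h2
      rw [← sdiff_union_inter U Y, h1, h2, union_empty]
    have : univ.filter (AuxDiv Y a b 0 U) = {∅} := by
      ext D
      simp only [mem_filter, mem_univ, true_and, mem_singleton]
      constructor
      · intro h; exact Finset.card_eq_zero.1 h.1
      · rintro rfl; subst hU; simp [AuxDiv]
    rw [this]; simp
  | succ k ih =>
    intro U h1 h2
    have hd := aux_double Y a b k ha U
    have hs : ∀ I ∈ univ.filter
        (fun I : Finset α => I ⊆ U ∧ (I ∩ Y).card = a ∧ (I \ Y).card = b),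
        (univ.filter (AuxDiv Y a b k (U \ I))).card * (k ! * (a !) ^ k * (b !) ^ k) =
          (k * a)! * (k * b)! := by
      intro I hI
      simp only [mem_filter, mem_univ, true_and] at hI
      obtain ⟨hIU, hIa, hIb⟩ := hI
      apply ih
      · have e : (U \ I) ∩ Y = (U ∩ Y) \ (I ∩ Y) := by ext x; grind
        rw [e, card_sdiff_of_subset (inter_subset_inter_right hIU), h1, hIa, Nat.succ_mul]
        omega
      · have e : (U \ I) \ Y = (U \ Y) \ (I \ Y) := by ext x; grind
        rw [e, card_sdiff_of_subset (sdiff_subset_sdiff hIU (le_refl _)), h2, hIb, Nat.succ_mul]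
        omega
    have hb := aux_blocks Y U a b
    rw [h1, h2] at hb
    have ca := Nat.add_choose_mul_factorial_mul_factorial (k * a) a
    have cb := Nat.add_choose_mul_factorial_mul_factorial (k * b) b
    have ca' : ((k + 1) * a).choose a * (k * a)! * a ! = ((k + 1) * a)! := by
      rw [Nat.succ_mul, ← ca]
    have cb' : ((k + 1) * b).choose b * (k * b)! * b ! = ((k + 1) * b)! := by
      rw [Nat.succ_mul, ← cb]
    calc _ = ((univ.filter (AuxDiv Y a b (k + 1) U)).card * (k + 1)) *
          (k ! * (a !) ^ k * (b !) ^ k) * (a ! * b !) := by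
            rw [Nat.factorial_succ]; ring
      _ = _ := by
        rw [hd, sum_mul, sum_congr rfl hs, sum_const, hb, ← ca', ← cb', smul_eq_mul]
        ring

theorem stmt2 (n ℓ k : ℕ) (hn : 0 < n) (hl : 0 < ℓ) (hk : 0 < k)
    (hkn : k ∣ n) (hkl : k ∣ ℓ) (hln : ℓ ≤ n) (hnk : k ≤ n)
    (Y : Finset (Fin n)) (hY : Y.card = ℓ) :
    (Finset.univ.filter
        (fun D => IsKDivision n k D ∧ IsGoodDivision n ℓ k Y D)).card
      = ℓ ! * (n - ℓ)! / (k ! * ((ℓ / k)!) ^ k * (((n - ℓ) / k)!) ^ k) := by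
  classical
  obtain ⟨a, rfl⟩ := hkl
  obtain ⟨m, rfl⟩ := hkn
  have ham : a ≤ m := Nat.le_of_mul_le_mul_left hln hk
  obtain ⟨b, rfl⟩ := Nat.exists_eq_add_of_le ham
  have ha : 0 < a := Nat.pos_of_mul_pos_left hl
  have e : k * (a + b) - k * a = k * b := by rw [mul_add]; omega
  rw [e, Nat.mul_div_cancel_left _ hk, Nat.mul_div_cancel_left _ hk]
  have hc : (Finset.univ \ Y).card = k * b := by
    rw [Finset.card_sdiff_of_subset (Finset.subset_univ _), Finset.card_univ, Fintype.card_fin,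
      hY, e]
  have key := aux_count Y a b ha k Finset.univ (by rw [Finset.univ_inter, hY]) hc
  rw [← key, Nat.mul_div_cancel _ (by positivity)]
  congr 1
  ext D
  simp only [Finset.mem_filter, Finset.mem_univ, true_and, IsKDivision, IsGoodDivision, AuxDiv,
    Nat.mul_div_cancel_left _ hk]
  have hI : ∀ I : Finset (Fin (k * (a + b))), (I ∩ Y).card + (I \ Y).card = I.card :=
    fun I => Finset.card_inter_add_card_sdiff I Y
  constructor
  · rintro ⟨⟨h1, h2, h3, h4⟩, h5⟩
    refine ⟨h1, fun I h => ⟨h5 I h, ?_⟩, h3, h4⟩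
    have := hI I; have := h2 I h; have := h5 I h; omega
  · rintro ⟨h1, h2, h3, h4⟩
    refine ⟨⟨h1, fun I h => ?_, h3, h4⟩, fun I h => (h2 I h).1⟩
    have := hI I; have := h2 I h; omega
end

section
/- Let k and n be positive integers with k ∣ n. Then k^n · 2^(−k) · k^(k/2) · (2πn)^((1−k)/2) ≤ n! / ((n/k)!)^k ≤ 2 · k^n · k^(k/2) · (2πn)^((1−k)/2), where all expressions are interpreted as real numbers and the exponents k/2 and (1−k)/2 are real exponents. -/
open Nat Real

lemma stirling_upper_aux (n : ℕ) (hn : 0 < n) :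
    (n ! : ℝ) ≤ 2 * (√(2 * π * n) * (n / rexp 1) ^ n) := by
  obtain ⟨m, rfl⟩ : ∃ m, n = m + 1 := ⟨n - 1, by omega⟩
  have h1 : Stirling.stirlingSeq (m + 1) ≤ Stirling.stirlingSeq 1 :=
    Stirling.stirlingSeq'_antitone (Nat.zero_le m)
  rw [Stirling.stirlingSeq_one] at h1
  have h2 : rexp 1 / √2 ≤ 2 * √π := by
    rw [div_le_iff₀ (by positivity)]
    have h3 : rexp 1 < 3 := by linarith [Real.exp_one_lt_d9]
    have h4 : (1 : ℝ) ≤ √2 := Real.one_le_sqrt.mpr (by norm_num)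
    have h5 : (3 / 2 : ℝ) ≤ √π := by
      apply Real.le_sqrt_of_sq_le
      linarith [Real.pi_gt_three]
    nlinarith
  have h := h1.trans h2
  rw [Stirling.stirlingSeq, div_le_iff₀ (by positivity)] at h
  refine h.trans (le_of_eq ?_)
  have : √(2 * π * ((m + 1 : ℕ) : ℝ)) = √π * √(2 * ((m + 1 : ℕ) : ℝ)) := by
    rw [← Real.sqrt_mul (by positivity)]
    congr 1
    ring
  rw [this]
  ring

lemma stirling_ratio_aux (m k : ℕ) (hm : 0 < m) (hk : 0 < k) :
    √(2 * π * (k * m : ℕ)) * ((k * m : ℕ) / rexp 1) ^ (k * m) =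
    (k : ℝ) ^ (k * m) * (k : ℝ) ^ ((k : ℝ) / 2) *
        (2 * Real.pi * (k * m : ℕ)) ^ ((1 - (k : ℝ)) / 2) *
      (√(2 * π * m) * (m / rexp 1) ^ m) ^ k := by
  have hm' : (0 : ℝ) < m := by exact_mod_cast hm
  have hk' : (0 : ℝ) < k := by exact_mod_cast hk
  have e1 : (k : ℝ) ^ ((k : ℝ) / 2) = √(k : ℝ) ^ k := by
    rw [Real.sqrt_eq_rpow, ← Real.rpow_natCast, ← Real.rpow_mul hk'.le]
    congr 1
    ring
  have hx : (0 : ℝ) < 2 * π * (k * m : ℕ) := by push_cast; positivity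
  have e2 : (2 * Real.pi * (k * m : ℕ)) ^ ((1 - (k : ℝ)) / 2) =
      √(2 * π * (k * m : ℕ)) / √(2 * π * (k * m : ℕ)) ^ k := by
    rw [Real.sqrt_eq_rpow, ← Real.rpow_natCast, ← Real.rpow_mul hx.le, ← Real.rpow_sub hx]
    congr 1
    ring
  have e3 : √(2 * π * (k * m : ℕ)) = √(k : ℝ) * √(2 * π * m) := by
    rw [← Real.sqrt_mul hk'.le]
    congr 1
    push_cast
    ring
  have p1 : 0 < √(k : ℝ) := by positivity
  have p2 : 0 < √(2 * π * m) := by positivity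
  rw [e1, e2, e3]
  generalize √(k : ℝ) = a at *
  generalize √(2 * π * m) = b at *
  have e4 : (((k * m : ℕ) : ℝ) / rexp 1) ^ (k * m) =
      (k : ℝ) ^ (k * m) * ((m / rexp 1) ^ m) ^ k := by
    rw [← pow_mul, mul_comm m k, ← mul_pow]
    congr 1
    push_cast
    ring
  rw [e4, mul_pow a b, mul_pow b]
  generalize ((m / rexp 1) ^ m) ^ k = c
  field_simp

theorem stmt3 (n k : ℕ) (hn : 0 < n) (hk : 0 < k) (hkn : k ∣ n) :
    (k : ℝ) ^ n * (2 : ℝ) ^ (-(k : ℝ)) * (k : ℝ) ^ ((k : ℝ) / 2) *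
        (2 * Real.pi * n) ^ ((1 - (k : ℝ)) / 2)
      ≤ (n ! : ℝ) / ((n / k)! : ℝ) ^ k ∧
    (n ! : ℝ) / ((n / k)! : ℝ) ^ k
      ≤ 2 * (k : ℝ) ^ n * (k : ℝ) ^ ((k : ℝ) / 2) *
        (2 * Real.pi * n) ^ ((1 - (k : ℝ)) / 2) := by
  obtain ⟨m, rfl⟩ := hkn
  have hm : 0 < m := Nat.pos_of_mul_pos_left hn
  rw [Nat.mul_div_cancel_left m hk]
  have hr := stirling_ratio_aux m k hm hk
  have l1 := Stirling.le_factorial_stirling (k * m)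
  have u1 := stirling_upper_aux (k * m) hn
  have l2 := Stirling.le_factorial_stirling m
  have u2 := stirling_upper_aux m hm
  rw [hr] at l1 u1
  have hS : 0 ≤ √(2 * π * m) * (m / rexp 1) ^ m := by positivity
  generalize √(2 * π * m) * (m / rexp 1) ^ m = S at *
  have hM : 0 ≤ (k : ℝ) ^ (k * m) * (k : ℝ) ^ ((k : ℝ) / 2) *
        (2 * Real.pi * (k * m : ℕ)) ^ ((1 - (k : ℝ)) / 2) := by positivity
  have l3 : S ^ k ≤ (m ! : ℝ) ^ k := pow_le_pow_left₀ hS l2 k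
  have u3 : (m ! : ℝ) ^ k ≤ 2 ^ k * S ^ k := by
    rw [← mul_pow]
    exact pow_le_pow_left₀ (by positivity) u2 k
  have hF : (0 : ℝ) < (m ! : ℝ) ^ k := by positivity
  rw [le_div_iff₀ hF, div_le_iff₀ hF, Real.rpow_neg (by norm_num), Real.rpow_natCast]
  generalize (k : ℝ) ^ ((k : ℝ) / 2) = A at *
  generalize (2 * Real.pi * (k * m : ℕ)) ^ ((1 - (k : ℝ)) / 2) = B at *
  generalize (k : ℝ) ^ (k * m) = C at *
  constructor
  · refine le_trans ?_ l1
    calc C * (2 ^ k)⁻¹ * A * B * (m ! : ℝ) ^ k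
        = (C * A * B) * ((2 ^ k)⁻¹ * (m ! : ℝ) ^ k) := by ring
      _ ≤ (C * A * B) * S ^ k := by
        apply mul_le_mul_of_nonneg_left _ hM
        rw [inv_mul_le_iff₀ (by positivity)]
        exact u3
  · refine u1.trans ?_
    calc 2 * (C * A * B * S ^ k) ≤ 2 * (C * A * B * (m ! : ℝ) ^ k) := by gcongr
      _ = _ := by ring
end

section
/- Let k, n, ℓ be positive integers with k ∣ n, k ∣ ℓ and ℓ ≤ n. For i ∈ ZMod n let B_i = {i, i+1, ..., i + n/k − 1} ⊆ ZMod n be the set of n/k consecutive residues starting at i. Then for every subset Y of ZMod n with card Y = ℓ there exists i ∈ ZMod n such that card (B_i ∩ Y) = ℓ/k. -/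
theorem card_block (n w : ℕ) (hw : w ≤ n) (Y : Finset (ZMod n)) (i : ZMod n) :
    (((Finset.range w).image (fun (j : ℕ) => i + (j : ZMod n))) ∩ Y).card
      = ∑ j ∈ Finset.range w, if i + (j : ZMod n) ∈ Y then 1 else 0 := by
  have hinj : Set.InjOn (fun (j : ℕ) => i + (j : ZMod n)) (Finset.range w : Set ℕ) := by
    intro a ha b hb hab
    simp only [Finset.coe_range, Set.mem_Iio] at ha hb
    have h1 : (a : ZMod n) = b := add_left_cancel hab
    rw [ZMod.natCast_eq_natCast_iff] at h1
    exact Nat.ModEq.eq_of_lt_of_lt h1 (by omega) (by omega)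
  rw [← Finset.card_filter, ← Finset.filter_mem_eq_inter, Finset.filter_image,
    Finset.card_image_of_injOn]
  exact hinj.mono (Finset.coe_subset.mpr (Finset.filter_subset _ _))

theorem sum_blocks (f : ℕ → ℕ) (w k : ℕ) :
    ∑ t ∈ Finset.range (w * k), f t
      = ∑ i ∈ Finset.range k, ∑ j ∈ Finset.range w, f (w * i + j) := by
  induction k with
  | zero => simp
  | succ k ih => rw [Nat.mul_succ, Finset.sum_range_add, ih, Finset.sum_range_succ]

theorem stmt4 (n ℓ k : ℕ) (hn : 0 < n) (hl : 0 < ℓ) (hk : 0 < k)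
    (hkn : k ∣ n) (hkl : k ∣ ℓ) (hln : ℓ ≤ n)
    (Y : Finset (ZMod n)) (hY : Y.card = ℓ) :
    ∃ i : ZMod n,
      (((Finset.range (n / k)).image (fun (j : ℕ) => i + (j : ZMod n))) ∩ Y).card
        = ℓ / k := by
  haveI : NeZero n := ⟨hn.ne'⟩
  obtain ⟨w, hw⟩ := hkn
  obtain ⟨m, hm⟩ := hkl
  have hwn : n / k = w := by rw [hw]; exact Nat.mul_div_cancel_left _ hk
  have hml : ℓ / k = m := by rw [hm]; exact Nat.mul_div_cancel_left _ hk
  rw [hwn, hml]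
  have hwle : w ≤ n := by rw [hw]; exact Nat.le_mul_of_pos_left _ hk
  obtain ⟨a, ha⟩ : ∃ a : ℕ → ℕ, ∀ t, a t = if (t : ZMod n) ∈ Y then 1 else 0 :=
    ⟨_, fun _ => rfl⟩
  have ha1 : ∀ t, a t ≤ 1 := by intro t; rw [ha]; split_ifs <;> simp
  obtain ⟨S, hS⟩ : ∃ S : ℕ → ℕ, ∀ i, S i = ∑ j ∈ Finset.range w, a (i + j) :=
    ⟨_, fun _ => rfl⟩
  have hcard : ∀ i : ℕ, (((Finset.range w).image
      (fun (j : ℕ) => (i : ZMod n) + (j : ZMod n))) ∩ Y).card = S i := by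
    intro i
    rw [card_block n w hwle, hS]
    simp only [ha, Nat.cast_add]
  have hstep : ∀ i, S (i + 1) + a i = S i + a (i + w) := by
    intro i
    have h1 := Finset.sum_range_succ (fun j => a (i + j)) w
    have h2 := Finset.sum_range_succ' (fun j => a (i + j)) w
    have h3 : S (i + 1) = ∑ j ∈ Finset.range w, a (i + (j + 1)) := by
      rw [hS]; exact Finset.sum_congr rfl fun j _ => by congr 1; omega
    rw [h3, hS]
    simp only [add_zero] at h2
    omega
  have htot : ∑ t ∈ Finset.range n, a t = ℓ := by
    have h := card_block n n le_rfl Y 0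
    have hu := card_block n n le_rfl Finset.univ 0
    simp only [Finset.inter_univ, Finset.mem_univ, if_true, Finset.sum_const, Finset.card_range,
      smul_eq_mul, mul_one] at hu
    rw [Finset.eq_univ_of_card _ (hu.trans (ZMod.card n).symm), Finset.univ_inter, hY] at h
    rw [h]
    simp [ha]
  have hsum : ∑ i ∈ Finset.range k, S (w * i) = k * m := by
    rw [← hm, ← htot, hw, mul_comm k w, sum_blocks]
    simp only [hS]
  by_contra hne
  push Not at hne
  have hSne : ∀ i, S i ≠ m := fun i h => hne i ((hcard i).trans h)
  have hne' : (Finset.range k).Nonempty := by simpa using hk.ne'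
  rcases lt_or_gt_of_ne (hSne 0) with h0 | h0
  · have hall : ∀ i, S i < m := by
      intro i
      induction i with
      | zero => exact h0
      | succ i ih => have := hstep i; have := ha1 i; have := ha1 (i + w); have := hSne (i + 1); omega
    have := Finset.sum_lt_sum_of_nonempty hne' (fun i _ => hall (w * i))
    simp [hsum] at this
  · have hall : ∀ i, m < S i := by
      intro i
      induction i with
      | zero => exact h0
      | succ i ih => have := hstep i; have := ha1 i; have := ha1 (i + w); have := hSne (i + 1); omega
    have := Finset.sum_lt_sum_of_nonempty hne' (fun i _ => hall (w * i))
    simp [hsum] at this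
end

section
/- Let k ≥ 2 and let n, ℓ be positive integers with k ∣ n, k ∣ ℓ, ℓ ≤ n and n ≥ k. Then there exists a finite set D of k-divisions of Fin n with card D < n^(k−1) such that for every subset Y of Fin n with card Y = ℓ, some k-division in D is good with respect to Y (i.e., D is an (n, ℓ, k)-splitting system with fewer than n^(k−1) divisions). -/
theorem aux_ivt (g : ℕ → ℤ) (hg : ∀ i, |g (i + 1) - g i| ≤ 1) (a d : ℕ)
    (h : (g a ≤ 0 ∧ 0 ≤ g (a + d)) ∨ (0 ≤ g a ∧ g (a + d) ≤ 0)) :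
    ∃ i, i ≤ a + d ∧ g i = 0 := by
  induction d with
  | zero => exact ⟨a, by omega, by simp at h; omega⟩
  | succ d ih =>
    have h1 := abs_le.mp (hg (a + d))
    rw [← add_assoc] at h
    by_cases h0 : g (a + d + 1) = 0
    · exact ⟨a + d + 1, by omega, h0⟩
    · obtain ⟨i, hi, hi'⟩ := ih (by omega)
      exact ⟨i, by omega, hi'⟩

theorem aux_prefix (P : ℕ → ℤ) (hP : ∀ i, P i ≤ P (i + 1) ∧ P (i + 1) ≤ P i + 1)
    (j m : ℕ) (l : ℤ) (h0 : P 0 = 0) (hN : P ((j + 1) * m) = (j + 1) * l) :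
    ∃ i, i ≤ j * m ∧ P (i + m) - P i = l := by
  set g : ℕ → ℤ := fun i => P (i + m) - P i - l with hgdef
  have hg : ∀ i, |g (i + 1) - g i| ≤ 1 := by
    intro i
    have h1 := hP i
    have h2 := hP (i + m)
    rw [abs_le]
    simp only [hgdef, show i + 1 + m = i + m + 1 by ring]
    omega
  have hsum : ∑ t ∈ Finset.range (j + 1), g (t * m) = 0 := by
    have := Finset.sum_range_sub (fun t => P (t * m)) (j + 1)
    simp only [hgdef, Finset.sum_sub_distrib] at this ⊢
    have e : ∀ t, t * m + m = (t + 1) * m := fun t => by ring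
    simp only [e]
    rw [this, hN]
    simp [h0]
  have hA : ∃ a ∈ Finset.range (j + 1), g (a * m) ≤ 0 := by
    by_contra! hc
    have := Finset.sum_pos hc ⟨0, by simp⟩
    omega
  have hB : ∃ a ∈ Finset.range (j + 1), 0 ≤ g (a * m) := by
    by_contra! hc
    have := Finset.sum_neg hc ⟨0, by simp⟩
    omega
  obtain ⟨a, ha, ha'⟩ := hA
  obtain ⟨b, hb, hb'⟩ := hB
  simp only [Finset.mem_range] at ha hb
  have la : a * m ≤ j * m := Nat.mul_le_mul_right _ (by omega)
  have lb : b * m ≤ j * m := Nat.mul_le_mul_right _ (by omega)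
  have : ∃ i, i ≤ j * m ∧ g i = 0 := by
    rcases le_total (a * m) (b * m) with h | h
    · obtain ⟨d, hd⟩ := Nat.exists_eq_add_of_le h
      obtain ⟨i, hi, hi'⟩ := aux_ivt g hg (a * m) d (Or.inl ⟨ha', hd ▸ hb'⟩)
      exact ⟨i, by omega, hi'⟩
    · obtain ⟨d, hd⟩ := Nat.exists_eq_add_of_le h
      obtain ⟨i, hi, hi'⟩ := aux_ivt g hg (b * m) d (Or.inr ⟨hb', hd ▸ ha'⟩)
      exact ⟨i, by omega, hi'⟩
  obtain ⟨i, hi, hi'⟩ := this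
  exact ⟨i, hi, by simp only [hgdef] at hi'; omega⟩

theorem aux_enum {α : Type*} [DecidableEq α] (S : Finset α) :
    ∃ f : Finset ℕ → Finset α, (∀ A, A ⊆ Finset.range S.card → f A ⊆ S ∧ (f A).card = A.card) ∧
      ∀ Y : Finset α, ∃ Z : Finset ℕ, (Z ⊆ Finset.range S.card ∧ Z.card = (S ∩ Y).card) ∧
        ∀ A, A ⊆ Finset.range S.card → (f A ∩ Y).card = (A ∩ Z).card := by
  have e := S.equivFin
  refine ⟨fun A => (S.attach.filter (fun s => (e s : ℕ) ∈ A)).image Subtype.val, ?_, ?_⟩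
  · intro A hA
    refine ⟨?_, ?_⟩
    · intro x hx
      simp at hx
      exact hx.1
    · rw [Finset.card_image_of_injective _ Subtype.val_injective]
      refine Finset.card_bij (fun s _ => (e s : ℕ)) ?_ ?_ ?_
      · intro s hs; simpa using hs
      · intro s _ t _ h
        exact e.injective (Fin.ext h)
      · intro b hb
        have := Finset.mem_range.mp (hA hb)
        exact ⟨e.symm ⟨b, this⟩, by simpa using hb, by simp⟩
  · intro Y
    refine ⟨(S.attach.filter (fun s : S => (s : α) ∈ Y)).image (fun s => (e s : ℕ)), ⟨?_, ?_⟩, ?_⟩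
    · intro x hx
      simp only [Finset.mem_image] at hx
      obtain ⟨s, _, rfl⟩ := hx
      simp
    · rw [Finset.card_image_of_injective _ (fun s t h => e.injective (Fin.ext h))]
      refine Finset.card_bij (fun s _ => (s : α)) ?_ ?_ ?_
      · intro s hs
        have := s.2
        simpa using hs
      · intro s _ t _ h
        exact Subtype.ext h
      · intro b hb
        rw [Finset.mem_inter] at hb
        exact ⟨⟨b, hb.1⟩, by simpa using hb.2, rfl⟩
    · intro A hA
      symm
      refine Finset.card_bij (fun b hb => ((e.symm ⟨b, Finset.mem_range.mp (hA (Finset.mem_inter.mp hb).1)⟩ : S) : α)) ?_ ?_ ?_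
      · intro b hb
        have hb2 := Finset.mem_inter.mp hb
        obtain ⟨hb1, hb2⟩ := hb2
        simp only [Finset.mem_image, Finset.mem_filter] at hb2
        obtain ⟨s, hs, rfl⟩ := hb2
        simp only [Fin.eta, Equiv.symm_apply_apply, Finset.mem_inter, Finset.mem_image, Finset.mem_filter]
        exact ⟨⟨s, ⟨by simp, hb1⟩, rfl⟩, hs.2⟩
      · intro a ha b hb h
        have := e.symm.injective (Subtype.ext h)
        simpa using this
      · intro x hx
        simp only [Finset.mem_inter, Finset.mem_image, Finset.mem_filter] at hx
        obtain ⟨⟨s, ⟨_, hs⟩, rfl⟩, hy⟩ := hx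
        refine ⟨e s, ?_, by simp⟩
        simp only [Finset.mem_inter, Finset.mem_image, Finset.mem_filter]
        exact ⟨hs, s, ⟨by simp, hy⟩, rfl⟩

theorem aux_window {α : Type*} [DecidableEq α] (S : Finset α) (j m l : ℕ)
    (hS : S.card = (j + 1) * m) :
    ∃ W : Finset (Finset α), (∀ w ∈ W, w ⊆ S ∧ w.card = m) ∧ W.card ≤ j * m + 1 ∧
      ∀ Y : Finset α, (S ∩ Y).card = (j + 1) * l → ∃ w ∈ W, (w ∩ Y).card = l := by
  obtain ⟨f, hf, hY⟩ := aux_enum S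
  have hsub : ∀ i, i ≤ j * m → Finset.Ico i (i + m) ⊆ Finset.range S.card := by
    intro i hi x hx
    rw [hS, Finset.mem_range, add_mul]
    rw [Finset.mem_Ico] at hx
    omega
  refine ⟨(Finset.range (j * m + 1)).image (fun i => f (Finset.Ico i (i + m))), ?_, ?_, ?_⟩
  · intro w hw
    simp only [Finset.mem_image, Finset.mem_range] at hw
    obtain ⟨i, hi, rfl⟩ := hw
    have := hf _ (hsub i (by omega))
    simpa using this
  · exact Finset.card_image_le.trans (by simp)
  · intro Y hc
    obtain ⟨Z, ⟨hZ, hZc⟩, hZA⟩ := hY Y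
    have key : ∀ i d, ((Finset.range (i + d) ∩ Z).card : ℤ) =
        (Finset.range i ∩ Z).card + (Finset.Ico i (i + d) ∩ Z).card := by
      intro i d
      rw [← Nat.cast_add, ← Finset.card_union_of_disjoint, ← Finset.union_inter_distrib_right]
      · congr 3
        ext x; simp; omega
      · rw [Finset.disjoint_left]
        intro x hx hx'
        simp at hx hx'
        omega
    obtain ⟨i, hi, hi'⟩ := aux_prefix (fun i => ((Finset.range i ∩ Z).card : ℤ)) (by
      intro i
      have := key i 1
      have h1 : (Finset.Ico i (i + 1) ∩ Z).card ≤ 1 :=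
        (Finset.card_le_card Finset.inter_subset_left).trans (by simp)
      omega) j m l (by simp) (by
      rw [← hS, Finset.inter_eq_right.mpr hZ, hZc, hc]
      push_cast; ring)
    refine ⟨_, Finset.mem_image.mpr ⟨i, by simpa using Nat.lt_succ_of_le hi, rfl⟩, ?_⟩
    rw [hZA _ (hsub i hi)]
    have := key i m
    omega

theorem aux_main {α : Type*} [DecidableEq α] (m l : ℕ) (hm : 0 < m) (j : ℕ) :
    ∀ S : Finset α, S.card = (j + 1) * m →
    ∃ D : Finset (Finset (Finset α)),
      (∀ d ∈ D, d.card = j + 1 ∧ (∀ I ∈ d, I.card = m) ∧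
        (∀ I ∈ d, ∀ J ∈ d, I ≠ J → Disjoint I J) ∧ d.biUnion id = S) ∧
      D.card ≤ (j * m + 1) ^ j ∧
      ∀ Y : Finset α, (S ∩ Y).card = (j + 1) * l → ∃ d ∈ D, ∀ I ∈ d, (I ∩ Y).card = l := by
  induction j with
  | zero =>
    intro S hS
    refine ⟨{{S}}, ?_, by simp, ?_⟩
    · simp at hS ⊢
      exact hS
    · intro Y hY
      simpa using hY
  | succ j ih =>
    intro S hS
    obtain ⟨W, hW, hWc, hWY⟩ := aux_window S (j + 1) m l hS
    have hcard : ∀ w ∈ W, (S \ w).card = (j + 1) * m := by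
      intro w hw
      rw [Finset.card_sdiff_of_subset (hW w hw).1, hS, (hW w hw).2]
      rw [add_mul (j + 1)]; omega
    have ih' : ∀ w : Finset α, ∃ D : Finset (Finset (Finset α)), w ∈ W →
      (∀ d ∈ D, d.card = j + 1 ∧ (∀ I ∈ d, I.card = m) ∧
        (∀ I ∈ d, ∀ J ∈ d, I ≠ J → Disjoint I J) ∧ d.biUnion id = S \ w) ∧
      D.card ≤ (j * m + 1) ^ j ∧
      ∀ Y : Finset α, ((S \ w) ∩ Y).card = (j + 1) * l → ∃ d ∈ D, ∀ I ∈ d, (I ∩ Y).card = l := by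
      intro w
      by_cases hw : w ∈ W
      · obtain ⟨D, hD⟩ := ih (S \ w) (hcard w hw)
        exact ⟨D, fun _ => hD⟩
      · exact ⟨∅, fun h => absurd h hw⟩
    choose E hE using ih'
    refine ⟨W.biUnion (fun w => (E w).image (insert w)), ?_, ?_, ?_⟩
    · intro d hd
      simp only [Finset.mem_biUnion, Finset.mem_image] at hd
      obtain ⟨w, hw, d, hd, rfl⟩ := hd
      obtain ⟨h1, h2, h3, h4⟩ := (hE w hw).1 d hd
      have hdis : ∀ I ∈ d, Disjoint w I := by
        intro I hI
        have : I ⊆ S \ w := by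
          rw [← h4]
          exact Finset.subset_biUnion_of_mem id hI
        exact Finset.disjoint_of_subset_right this Finset.disjoint_sdiff
      have hnot : w ∉ d := by
        intro h
        have h5 := hdis w h
        rw [disjoint_self, Finset.bot_eq_empty] at h5
        have := (hW w hw).2
        rw [h5] at this
        simp at this
        omega
      refine ⟨by rw [Finset.card_insert_of_notMem hnot, h1], ?_, ?_, ?_⟩
      · intro I hI
        rcases Finset.mem_insert.mp hI with rfl | hI
        · exact (hW _ hw).2
        · exact h2 I hI
      · intro I hI J hJ hne
        rcases Finset.mem_insert.mp hI with hI' | hI' <;> rcases Finset.mem_insert.mp hJ with hJ' | hJ'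
        · exact absurd (hI'.trans hJ'.symm) hne
        · rw [hI']
          exact hdis _ hJ'
        · rw [hJ']
          exact (hdis _ hI').symm
        · exact h3 I hI' J hJ' hne
      · rw [Finset.biUnion_insert, h4]
        exact Finset.union_sdiff_of_subset (hW w hw).1
    · calc _ ≤ ∑ w ∈ W, ((E w).image (insert w)).card := Finset.card_biUnion_le
        _ ≤ ∑ w ∈ W, (j * m + 1) ^ j :=
          Finset.sum_le_sum (fun w hw => Finset.card_image_le.trans (hE w hw).2.1)
        _ = W.card * (j * m + 1) ^ j := by simp
        _ ≤ ((j + 1) * m + 1) * ((j + 1) * m + 1) ^ j := by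
          gcongr; omega
        _ = _ := by ring
    · intro Y hY
      obtain ⟨w, hw, hwl⟩ := hWY Y hY
      obtain ⟨d, hd, hdg⟩ := (hE w hw).2.2 Y (by
        have h1 : (S \ w) ∩ Y = (S ∩ Y) \ (w ∩ Y) := by
          ext x; simp; tauto
        rw [h1, Finset.card_sdiff_of_subset (Finset.inter_subset_inter_right (hW w hw).1), hY, hwl]
        rw [add_mul (j + 1)]; omega)
      refine ⟨insert w d, Finset.mem_biUnion.mpr ⟨w, hw, Finset.mem_image_of_mem _ hd⟩, ?_⟩
      intro I hI
      rcases Finset.mem_insert.mp hI with rfl | hI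
      · exact hwl
      · exact hdg I hI

theorem stmt6 (k n ℓ : ℕ) (hk : 2 ≤ k) (hn : 0 < n) (hl : 0 < ℓ)
    (hkn : k ∣ n) (hkl : k ∣ ℓ) (hln : ℓ ≤ n) (hnk : k ≤ n) :
    ∃ D : Finset (Finset (Finset (Fin n))),
      (∀ d ∈ D, IsKDivision n k d) ∧ D.card < n ^ (k - 1) ∧
      ∀ Y : Finset (Fin n), Y.card = ℓ → ∃ d ∈ D, IsGoodDivision n ℓ k Y d := by
  obtain ⟨m, hm⟩ := hkn
  obtain ⟨l, hl'⟩ := hkl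
  obtain ⟨j, rfl⟩ : ∃ j, k = j + 1 := ⟨k - 1, by omega⟩
  have hm0 : 0 < m := Nat.pos_of_ne_zero (by rintro rfl; omega)
  have hl0 : 0 < l := Nat.pos_of_ne_zero (by rintro rfl; omega)
  have hnd : n / (j + 1) = m := by rw [hm]; exact Nat.mul_div_cancel_left _ (by omega)
  have hld : ℓ / (j + 1) = l := by rw [hl']; exact Nat.mul_div_cancel_left _ (by omega)
  obtain ⟨D, hD, hDc, hDY⟩ := aux_main m l hm0 j (Finset.univ : Finset (Fin n)) (by simpa using hm)
  have hD' : ∀ d ∈ D, IsKDivision n (j + 1) d := by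
    intro d hd
    unfold IsKDivision
    rw [hnd]
    exact hD d hd
  have hG : ∀ Y : Finset (Fin n), Y.card = ℓ → ∃ d ∈ D, IsGoodDivision n ℓ (j + 1) Y d := by
    intro Y hY
    unfold IsGoodDivision
    rw [hld]
    exact hDY Y (by rw [Finset.univ_inter, hY, hl'])
  simp only [Nat.add_sub_cancel]
  rcases Nat.lt_or_ge 1 m with h2 | h1
  · refine ⟨D, hD', lt_of_le_of_lt hDc ?_, hG⟩
    apply Nat.pow_lt_pow_left _ (by omega)
    rw [hm, add_mul]; omega
  · have hm1 : m = 1 := by omega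
    subst hm1
    have hnl : ℓ = n := by
      refine le_antisymm hln ?_
      rw [hm, hl']
      exact Nat.mul_le_mul_left _ hl0
    obtain ⟨d, hd, hdg⟩ := hG Finset.univ (by simp [hnl])
    refine ⟨{d}, by simpa using hD' d hd, ?_, ?_⟩
    · rw [Finset.card_singleton]
      exact Nat.one_lt_pow (by omega) (by omega)
    · intro Y hY
      have : Y = Finset.univ := by
        rw [← Finset.card_eq_iff_eq_univ, hY, hnl, Fintype.card_fin]
      exact ⟨d, by simp, this ▸ hdg⟩
end

section
/- Let m be a positive integer, and let c, D be nonnegative integers with D ≤ c and m ≥ 8c + 8. For x ∈ ZMod m write rep(x) for its minimal-absolute-value representative, the unique integer congruent to x mod m lying in (−m/2, m/2]. Let s₁, s₂, s₃, s₄ ∈ ZMod m satisfy |rep(s₁ + s₂ + s₃ + s₄)| ≤ D. Then the number of pairs (r₁, r₂) ∈ (ZMod m)² such that |rep(s₁ + r₁) + rep(s₂ + r₂)| ≤ c and |rep(s₃ − r₁) + rep(s₄ − r₂)| ≤ c (where + inside rep is addition in ZMod m and the outer sums are integer sums of representatives) is at least (m − 4c − 4)·(2c + 1 − D) and at most m·(2c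 + 1). -/
lemma aux_bad (m : ℕ) [NeZero m] (c : ℕ) (f : ZMod m → ZMod m) (hf : f.Injective) :
    (Finset.univ.filter (fun x : ZMod m =>
      ¬ (2 * (c : ℤ) - m ≤ 2 * (f x).valMinAbs ∧ 2 * (f x).valMinAbs < m - 2 * c))).card
      ≤ 2 * c + 1 := by
  have h1 : (Finset.Icc (-((m : ℤ) / 2)) (c - (m : ℤ) / 2 - 1) ∪
      Finset.Icc ((m : ℤ) / 2 - c) ((m : ℤ) / 2)).card ≤ 2 * c + 1 := by
    refine (Finset.card_union_le _ _).trans ?_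
    rw [Int.card_Icc, Int.card_Icc]
    omega
  refine le_trans (Finset.card_le_card_of_injOn (fun x => (f x).valMinAbs) ?_ ?_) h1
  · intro x hx
    have hx' := (Finset.mem_filter.mp hx).2
    have h2 := ZMod.valMinAbs_mem_Ioc (f x)
    obtain ⟨h3, h4⟩ := h2
    simp only [Finset.coe_union, Finset.coe_Icc, Set.mem_union, Set.mem_Icc]
    omega
  · intro x _ y _ h
    exact hf (ZMod.injective_valMinAbs h)


theorem stmt10 (m : ℕ) [NeZero m] (c D : ℕ) (hDc : D ≤ c) (hm : 8 * c + 8 ≤ m)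
    (s₁ s₂ s₃ s₄ : ZMod m)
    (hsum : |(s₁ + s₂ + s₃ + s₄).valMinAbs| ≤ (D : ℤ)) :
    ((m : ℤ) - 4 * c - 4) * (2 * c + 1 - D) ≤
      ((Finset.univ.filter
          (fun p : ZMod m × ZMod m =>
            |(s₁ + p.1).valMinAbs + (s₂ + p.2).valMinAbs| ≤ (c : ℤ) ∧
            |(s₃ - p.1).valMinAbs + (s₄ - p.2).valMinAbs| ≤ (c : ℤ))).card : ℤ) ∧
    ((Finset.univ.filter
        (fun p : ZMod m × ZMod m =>
          |(s₁ + p.1).valMinAbs + (s₂ + p.2).valMinAbs| ≤ (c : ℤ) ∧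
          |(s₃ - p.1).valMinAbs + (s₄ - p.2).valMinAbs| ≤ (c : ℤ))).card : ℤ)
      ≤ (m : ℤ) * (2 * c + 1) := by

  constructor
  · set e := (s₁ + s₂ + s₃ + s₄).valMinAbs with he
    have hec : ((e : ℤ) : ZMod m) = s₁ + s₂ + s₃ + s₄ := ZMod.coe_valMinAbs _
    rw [abs_le] at hsum
    set K := Finset.Icc (max (-(c : ℤ)) (e - c)) (min (c : ℤ) (e + c)) with hK
    have hKc : (2 * c + 1 - D : ℤ) ≤ K.card := by
      rw [hK, Int.card_Icc]; omega
    set P : ZMod m → Prop := fun x =>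
      (2 * (c : ℤ) - m ≤ 2 * (s₁ + x).valMinAbs ∧ 2 * (s₁ + x).valMinAbs < m - 2 * c) with hP
    set Q : ZMod m → Prop := fun x =>
      (2 * (c : ℤ) - m ≤ 2 * (s₃ - x).valMinAbs ∧ 2 * (s₃ - x).valMinAbs < m - 2 * c) with hQ
    set G := Finset.univ.filter (fun x : ZMod m => P x ∧ Q x) with hG
    have hGc : (m : ℤ) - 4 * c - 4 ≤ G.card := by
      have b1 := aux_bad m c (fun x => s₁ + x) (add_right_injective s₁)
      have b2 := aux_bad m c (fun x => s₃ - x) (sub_right_injective)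
      have h1 := Finset.card_filter_add_card_filter_not (s := Finset.univ)
        (fun x : ZMod m => P x ∧ Q x)
      have h2 : (Finset.univ.filter (fun x : ZMod m => ¬ (P x ∧ Q x))).card ≤
          (Finset.univ.filter (fun x : ZMod m => ¬ P x)).card +
          (Finset.univ.filter (fun x : ZMod m => ¬ Q x)).card := by
        refine le_trans (Finset.card_le_card ?_) (Finset.card_union_le _ _)
        intro x hx
        simp only [Finset.mem_union, Finset.mem_filter, Finset.mem_univ, true_and] at hx ⊢
        tauto
      have h3 : (Finset.univ : Finset (ZMod m)).card = m := by
        rw [Finset.card_univ, ZMod.card]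
      have b1' : (Finset.univ.filter (fun x : ZMod m => ¬ P x)).card ≤ 2 * c + 1 := b1
      have b2' : (Finset.univ.filter (fun x : ZMod m => ¬ Q x)).card ≤ 2 * c + 1 := b2
      rw [← hG] at h1
      omega
    have hmain : (G ×ˢ K).card ≤ (Finset.univ.filter
          (fun p : ZMod m × ZMod m =>
            |(s₁ + p.1).valMinAbs + (s₂ + p.2).valMinAbs| ≤ (c : ℤ) ∧
            |(s₃ - p.1).valMinAbs + (s₄ - p.2).valMinAbs| ≤ (c : ℤ))).card := by
      refine Finset.card_le_card_of_injOn
        (fun q => (q.1, ((q.2 : ℤ) : ZMod m) - (s₁ + q.1) - s₂)) ?_ ?_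
      · rintro ⟨r, k⟩ hq
        obtain ⟨hr, hk⟩ := Finset.mem_product.mp hq
        obtain ⟨⟨p1, p2⟩, q1, q2⟩ := (Finset.mem_filter.mp hr).2
        have hk' := Finset.mem_Icc.mp hk
        dsimp only at p1 p2 q1 q2 hk'
        have e1 : (s₂ + ((k : ZMod m) - (s₁ + r) - s₂)).valMinAbs
            = k - (s₁ + r).valMinAbs := by
          rw [ZMod.valMinAbs_spec]
          refine ⟨?_, ?_, ?_⟩
          · push_cast [ZMod.coe_valMinAbs]; ring
          · omega
          · omega
        have e2 : (s₄ - ((k : ZMod m) - (s₁ + r) - s₂)).valMinAbs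
            = e - k - (s₃ - r).valMinAbs := by
          rw [ZMod.valMinAbs_spec]
          refine ⟨?_, ?_, ?_⟩
          · push_cast [ZMod.coe_valMinAbs, hec]; ring
          · omega
          · omega
        refine Finset.mem_coe.mpr (Finset.mem_filter.mpr ⟨Finset.mem_univ _, ?_⟩)
        dsimp only
        rw [e1, e2, abs_le, abs_le]
        omega
      · rintro ⟨r, k⟩ hq ⟨r', k'⟩ hq' h
        have hk := Finset.mem_Icc.mp (Finset.mem_product.mp hq).2
        have hk' := Finset.mem_Icc.mp (Finset.mem_product.mp hq').2
        dsimp only at hk hk'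
        simp only [Prod.mk.injEq] at h
        obtain ⟨rfl, h⟩ := h
        have h' : (k : ZMod m) = k' := by simpa using h
        have hv : (k : ZMod m).valMinAbs = k := by
          rw [ZMod.valMinAbs_spec]; exact ⟨rfl, by omega, by omega⟩
        have hv' : (k : ZMod m).valMinAbs = k' := by
          rw [ZMod.valMinAbs_spec]; exact ⟨h', by omega, by omega⟩
        rw [← hv, hv']
    rw [Finset.card_product] at hmain
    have hmain' := Int.ofNat_le.mpr hmain
    refine le_trans ?_ hmain'
    rw [Nat.cast_mul]
    exact mul_le_mul hGc hKc (by omega) (by omega)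
  · have h : (Finset.univ.filter
          (fun p : ZMod m × ZMod m =>
            |(s₁ + p.1).valMinAbs + (s₂ + p.2).valMinAbs| ≤ (c : ℤ) ∧
            |(s₃ - p.1).valMinAbs + (s₄ - p.2).valMinAbs| ≤ (c : ℤ))).card ≤
        ((Finset.univ : Finset (ZMod m)) ×ˢ Finset.Icc (-(c : ℤ)) c).card := by
      refine Finset.card_le_card_of_injOn
        (fun p => (p.1, (s₁ + p.1).valMinAbs + (s₂ + p.2).valMinAbs)) ?_ ?_
      · intro p hp
        have hp' := (Finset.mem_filter.mp hp).2.1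
        rw [abs_le] at hp'
        exact Finset.mem_coe.mpr (Finset.mem_product.mpr
          ⟨Finset.mem_univ _, Finset.mem_Icc.mpr hp'⟩)
      · rintro ⟨r, t⟩ _ ⟨r', t'⟩ _ h
        simp only [Prod.mk.injEq] at h
        obtain ⟨rfl, h⟩ := h
        have h2 := ZMod.injective_valMinAbs (add_left_cancel h)
        rw [add_left_cancel h2]
    rw [Finset.card_product, Finset.card_univ, ZMod.card, Int.card_Icc] at h
    have h4 : ((c : ℤ) + 1 - -(c : ℤ)).toNat = 2 * c + 1 := by omega
    rw [h4] at h
    exact_mod_cast h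
end

section
/- Let k ≥ 2 be an integer and let n, ℓ be integers with n > k and k < ℓ ≤ n. For i ∈ ZMod n let B_i = {i, i+1, ..., i + ⌊n/k⌋ − 1} ⊆ ZMod n be the set of ⌊n/k⌋ consecutive residues starting at i. Then for every subset Y of ZMod n with card Y = ℓ there exists i ∈ ZMod n such that card (B_i ∩ Y) = ⌊ℓ/k⌋. -/
theorem stmt11 (k n ℓ : ℕ) (hk : 2 ≤ k) (hn : k < n) (hl1 : k < ℓ) (hl2 : ℓ ≤ n)
    (Y : Finset (ZMod n)) (hY : Y.card = ℓ) :
    ∃ i : ZMod n,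
      (((Finset.range (n / k)).image (fun (j : ℕ) => i + (j : ZMod n))) ∩ Y).card
        = ℓ / k := by
  have : NeZero n := ⟨by omega⟩
  have hkpos : 0 < k := by omega
  have hw1 : 1 ≤ n / k := (Nat.one_le_div_iff hkpos).2 hn.le
  have hwn : n / k ≤ n := Nat.div_le_self n k
  have hm1 : 1 ≤ ℓ / k := (Nat.one_le_div_iff hkpos).2 hl1.le
  have hmw : ℓ / k ≤ n / k := Nat.div_le_div_right hl2
  have hn1 := Nat.div_add_mod n k
  have hl3 := Nat.div_add_mod ℓ k
  have hr := Nat.mod_lt n hkpos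
  have hs := Nat.mod_lt ℓ hkpos
  generalize n / k = w at *
  generalize ℓ / k = m at *
  generalize n % k = r at *
  generalize ℓ % k = s at *
  let c : ZMod n → ℕ := fun x => if x ∈ Y then 1 else 0
  let g : ZMod n → ℕ := fun i => ∑ j ∈ Finset.range w, c (i + (j : ZMod n))
  have hc : ∀ x, c x ≤ 1 := by
    intro x
    simp only [c]
    split_ifs <;> omega
  have hcard : ∀ i : ZMod n,
      (((Finset.range w).image (fun (j : ℕ) => i + (j : ZMod n))) ∩ Y).card = g i := by
    intro i
    rw [← Finset.filter_mem_eq_inter, Finset.card_filter, Finset.sum_image]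
    intro x hx y hy hxy
    have hx' : x < w := by simpa using hx
    have hy' : y < w := by simpa using hy
    have h := add_left_cancel hxy
    rw [ZMod.natCast_eq_natCast_iff'] at h
    rwa [Nat.mod_eq_of_lt (by omega), Nat.mod_eq_of_lt (by omega)] at h
  have hsum : ∑ i, g i = w * ℓ := by
    simp only [g]
    rw [Finset.sum_comm]
    have : ∀ j ∈ Finset.range w, ∑ i : ZMod n, c (i + (j : ZMod n)) = ℓ := by
      intro j _
      rw [show ∑ i : ZMod n, c (i + (j : ZMod n)) = ∑ i, c i from Equiv.sum_comp (Equiv.addRight (j : ZMod n)) c]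
      simp [c, hY]
    rw [Finset.sum_congr rfl this]
    simp
  have hstep : ∀ i, g (i + 1) + c i = g i + c (i + (w : ZMod n)) := by
    intro i
    have h1 := Finset.sum_range_succ (fun j : ℕ => c (i + (j : ZMod n))) w
    have h2 := Finset.sum_range_succ' (fun j : ℕ => c (i + (j : ZMod n))) w
    have h3 : g (i + 1) = ∑ j ∈ Finset.range w, c (i + ((j + 1 : ℕ) : ZMod n)) := by
      refine Finset.sum_congr rfl fun j _ => ?_
      congr 1
      push_cast
      ring
    simp only [Nat.cast_zero, add_zero] at h2
    rw [h3, ← h2, h1]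
  simp only [hcard]
  have hlow : ∃ a, g a ≤ m := by
    by_contra! h
    have h1 : ∑ _i : ZMod n, (m + 1) ≤ ∑ i, g i := Finset.sum_le_sum fun i _ => h i
    rw [hsum] at h1
    simp only [Finset.sum_const, Finset.card_univ, ZMod.card, smul_eq_mul] at h1
    have h2 : w * ℓ < w * (k * (m + 1)) := Nat.mul_lt_mul_of_pos_left (by rw [mul_add]; omega) hw1
    have h3 : (k * w) * (m + 1) ≤ n * (m + 1) := Nat.mul_le_mul_right _ (by omega)
    nlinarith
  have hhigh : ∃ b, m ≤ g b := by
    by_contra! h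
    obtain ⟨p, rfl⟩ : ∃ p, m = p + 1 := ⟨m - 1, by omega⟩
    have h1 : ∑ i, g i ≤ ∑ _i : ZMod n, p :=
      Finset.sum_le_sum fun i _ => Nat.lt_succ_iff.1 (h i)
    rw [hsum] at h1
    simp only [Finset.sum_const, Finset.card_univ, ZMod.card, smul_eq_mul] at h1
    have h2 : r * p ≤ k * p := Nat.mul_le_mul_right _ hr.le
    have h3 : k * p < k * w := Nat.mul_lt_mul_of_pos_left (by omega) hkpos
    have h4 : w * ℓ = w * (k * p) + w * k + w * s := by rw [← hl3]; ring
    have h5 : n * p = w * (k * p) + r * p := by rw [← hn1]; ring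
    nlinarith
  by_contra! hne
  obtain ⟨a, ha⟩ := hlow
  obtain ⟨b, hb⟩ := hhigh
  have hall : ∀ t : ℕ, g (a + (t : ZMod n)) < m := by
    intro t
    induction t with
    | zero => simpa using lt_of_le_of_ne ha (hne a)
    | succ t ih =>
      have e : a + ((t + 1 : ℕ) : ZMod n) = a + (t : ZMod n) + 1 := by push_cast; ring
      rw [e]
      have h1 := hstep (a + (t : ZMod n))
      have h2 := hc (a + (t : ZMod n) + (w : ZMod n))
      have h3 := hne (a + (t : ZMod n) + 1)
      omega
  have h := hall (b - a).val
  rw [ZMod.natCast_zmod_val, add_sub_cancel] at h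
  omega
end

section
/- There exist real constants c₁, c₂ > 0 such that for all positive integers n and ℓ with 4 ∣ n, 4 ∣ ℓ and 0 < ℓ < n, the central binomial-type estimate c₁ · (choose n ℓ)^(1/4) · (n / (ℓ·(n−ℓ)))^(3/8) ≤ choose (n/4) (ℓ/4) ≤ c₂ · (choose n ℓ)^(1/4) · (n / (ℓ·(n−ℓ)))^(3/8) holds, where choose a b denotes the binomial coefficient and the exponents 1/4 and 3/8 are real exponents (rpow) applied to the binomial coefficient and to the ratio viewed as real numbers. -/
lemma aux_fact (n : ℕ) (hn : n ≠ 0) : ∃ s : ℝ, 0 ≤ s ∧ s ≤ 1 ∧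
    Real.log (n.factorial : ℝ) = s + 1/2 * (Real.log 2 + Real.log n) + n * (Real.log n - 1) := by
  refine ⟨Real.log (Stirling.stirlingSeq n), ?_, ?_, ?_⟩
  · apply Real.log_nonneg
    refine le_trans ?_ (Stirling.sqrt_pi_le_stirlingSeq hn)
    rw [Real.one_le_sqrt]
    linarith [Real.pi_gt_three]
  · obtain ⟨k, rfl⟩ := Nat.exists_eq_succ_of_ne_zero hn
    have h := Stirling.log_stirlingSeq'_antitone (Nat.zero_le k)
    simp only [Function.comp] at h
    refine h.trans ?_
    have h1 : Stirling.stirlingSeq (Nat.succ 0) = Real.exp 1 / √2 := Stirling.stirlingSeq_one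
    rw [h1, Real.log_div (by positivity) (by positivity), Real.log_exp, Real.log_sqrt (by norm_num)]
    have := Real.log_pos (show (1:ℝ) < 2 by norm_num)
    linarith
  · have hn' : (n : ℝ) ≠ 0 := by exact_mod_cast hn
    rw [Stirling.log_stirlingSeq_formula, Real.log_mul (by norm_num) hn',
      Real.log_div hn' (by positivity), Real.log_exp]
    ring

lemma aux_choose (k j : ℕ) : Real.log ((k + j).choose k : ℝ) =
    Real.log ((k+j).factorial : ℝ) - Real.log (k.factorial : ℝ) - Real.log (j.factorial : ℝ) := by
  have h := Nat.add_choose_mul_factorial_mul_factorial k j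
  rw [← Nat.choose_symm_add] at h
  have h' : ((k + j).choose k : ℝ) * k.factorial * j.factorial = (k+j).factorial := by
    exact_mod_cast h
  have hc : ((k + j).choose k : ℝ) ≠ 0 := by
    exact_mod_cast (Nat.choose_pos (Nat.le_add_right k j)).ne'
  have h1 : (k.factorial : ℝ) ≠ 0 := by exact_mod_cast k.factorial_ne_zero
  have h2 : (j.factorial : ℝ) ≠ 0 := by exact_mod_cast j.factorial_ne_zero
  rw [← h', Real.log_mul (mul_ne_zero hc h1) h2, Real.log_mul hc h1]
  ring

lemma aux_main_s13 (k j : ℕ) (hk : k ≠ 0) (hj : j ≠ 0) :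
    |Real.log ((k + j).choose k : ℝ) - (1/4 * Real.log ((4 * k + 4 * j).choose (4 * k) : ℝ)
      + 3/8 * Real.log ((4 * ((k:ℝ) + j)) / ((4 * k) * (4 * j))))| ≤ 10 := by
  have hk' : (k : ℝ) ≠ 0 := by exact_mod_cast hk
  have hj' : (j : ℝ) ≠ 0 := by exact_mod_cast hj
  have hm' : (k : ℝ) + j ≠ 0 := by positivity
  have h4 : Real.log 4 = 2 * Real.log 2 := by
    rw [show (4:ℝ) = 2 ^ 2 by norm_num, Real.log_pow]; norm_num
  rw [aux_choose, aux_choose]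
  obtain ⟨s1, a1, b1, e1⟩ := aux_fact (k + j) (by omega)
  obtain ⟨s2, a2, b2, e2⟩ := aux_fact k hk
  obtain ⟨s3, a3, b3, e3⟩ := aux_fact j hj
  obtain ⟨s4, a4, b4, e4⟩ := aux_fact (4 * k + 4 * j) (by omega)
  obtain ⟨s5, a5, b5, e5⟩ := aux_fact (4 * k) (by omega)
  obtain ⟨s6, a6, b6, e6⟩ := aux_fact (4 * j) (by omega)
  rw [e1, e2, e3, e4, e5, e6]
  push_cast
  rw [← mul_add, Real.log_div (by positivity) (by positivity),
    Real.log_mul (x := 4 * (k:ℝ)) (by positivity) (by positivity),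
    Real.log_mul (by norm_num) hm', Real.log_mul (by norm_num) hk',
    Real.log_mul (by norm_num) hj', h4]
  have l1 := Real.log_pos (show (1:ℝ) < 2 by norm_num)
  have l2 := Real.log_two_lt_d9
  rw [abs_le]
  constructor <;> ring_nf <;> linarith

theorem stmt13 :
    ∃ c₁ c₂ : ℝ, 0 < c₁ ∧ 0 < c₂ ∧
      ∀ n ℓ : ℕ, 4 ∣ n → 4 ∣ ℓ → 0 < ℓ → ℓ < n →
        c₁ * ((n.choose ℓ : ℝ) ^ ((1 : ℝ) / 4)) *
            (((n : ℝ) / ((ℓ : ℝ) * ((n : ℝ) - (ℓ : ℝ)))) ^ ((3 : ℝ) / 8))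
          ≤ ((n / 4).choose (ℓ / 4) : ℝ) ∧
        ((n / 4).choose (ℓ / 4) : ℝ)
          ≤ c₂ * ((n.choose ℓ : ℝ) ^ ((1 : ℝ) / 4)) *
            (((n : ℝ) / ((ℓ : ℝ) * ((n : ℝ) - (ℓ : ℝ)))) ^ ((3 : ℝ) / 8)) := by
  refine ⟨Real.exp (-10), Real.exp 10, Real.exp_pos _, Real.exp_pos _, ?_⟩
  rintro n ℓ ⟨m, rfl⟩ ⟨k, rfl⟩ h0 hlt
  obtain ⟨j, rfl⟩ := Nat.exists_eq_add_of_le (show k ≤ m by omega)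
  have hk : k ≠ 0 := by omega
  have hj : j ≠ 0 := by omega
  have H := aux_main_s13 k j hk hj
  rw [abs_le] at H
  rw [Nat.mul_div_cancel_left _ (by norm_num), Nat.mul_div_cancel_left _ (by norm_num)]
  have hx : ((4 * (k + j) : ℕ) : ℝ) / (((4 * k : ℕ) : ℝ) * (((4 * (k + j) : ℕ) : ℝ) - ((4 * k : ℕ) : ℝ)))
      = (4 * ((k:ℝ) + j)) / ((4 * k) * (4 * j)) := by
    push_cast
    congr 2
    ring
  rw [hx, Nat.mul_add]
  have hk' : (0 : ℝ) < k := by exact_mod_cast Nat.pos_of_ne_zero hk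
  have hj' : (0 : ℝ) < j := by exact_mod_cast Nat.pos_of_ne_zero hj
  have hr : 0 < (4 * ((k:ℝ) + j)) / ((4 * k) * (4 * j)) := by positivity
  have hA : (0:ℝ) < ((k + j).choose k : ℝ) := by
    exact_mod_cast Nat.choose_pos (Nat.le_add_right k j)
  have hB : (0:ℝ) < ((4 * k + 4 * j).choose (4 * k) : ℝ) := by
    exact_mod_cast Nat.choose_pos (Nat.le_add_right _ _)
  rw [Real.rpow_def_of_pos hr, Real.rpow_def_of_pos hB, ← Real.exp_add, ← Real.exp_add,
    ← Real.exp_add, ← Real.exp_add, ← Real.le_log_iff_exp_le hA, ← Real.log_le_iff_le_exp hA]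
  constructor <;> linarith [H.1, H.2]
end
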